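/- Let the notation be as in the context, with two splicing data (superscripts 1 and 2), the splicing map D, and the quantities c•^i and d•^i defined for each datum. Then dim coker(D) ≥ cinf^1·cinf^2 + c0^1·c1^2 + c1^1·c0^2 + dinf^1·d0^2 + d0^1·dinf^2 + d1^1·d1^2. -/

import Mathlib

set_option maxHeartbeats 1600000

open Matrix Module
open scoped Kronecker

abbrev F2 : Type := ZMod 2

/-- A splicing datum: the algebraic data extracted from the knot Floer homology of a knot
in a homology sphere, as in Eftekhary's splicing formula. -/
structure SplicingDatum where
  a0 : ℕ
  a1 : ℕ
  ainf : ℕ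
  A0 : Matrix (Fin ainf) (Fin ainf) F2
  B0 : Matrix (Fin ainf) (Fin a1) F2
  C0 : Matrix (Fin a1) (Fin ainf) F2
  D0 : Matrix (Fin a1) (Fin a1) F2
  A1 : Matrix (Fin a0) (Fin a0) F2
  B1 : Matrix (Fin a0) (Fin ainf) F2
  C1 : Matrix (Fin ainf) (Fin a0) F2
  D1 : Matrix (Fin ainf) (Fin ainf) F2
  Ainf : Matrix (Fin a1) (Fin a1) F2
  Binf : Matrix (Fin a1) (Fin a0) F2
  Cinf : Matrix (Fin a0) (Fin a1) F2
  Dinf : Matrix (Fin a0) (Fin a0) F2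
  C0inv : Matrix (Fin a1) (Fin ainf) F2
  C1inv : Matrix (Fin ainf) (Fin a0) F2
  Cinfinv : Matrix (Fin a0) (Fin a1) F2
  inv0_left : Matrix.fromBlocks A0 B0 C0 D0 * Matrix.fromBlocks A0 B0 C0inv D0 = 1
  inv0_right : Matrix.fromBlocks A0 B0 C0inv D0 * Matrix.fromBlocks A0 B0 C0 D0 = 1
  inv1_left : Matrix.fromBlocks A1 B1 C1 D1 * Matrix.fromBlocks A1 B1 C1inv D1 = 1
  inv1_right : Matrix.fromBlocks A1 B1 C1inv D1 * Matrix.fromBlocks A1 B1 C1 D1 = 1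
  invinf_left : Matrix.fromBlocks Ainf Binf Cinf Dinf * Matrix.fromBlocks Ainf Binf Cinfinv Dinf = 1
  invinf_right : Matrix.fromBlocks Ainf Binf Cinfinv Dinf * Matrix.fromBlocks Ainf Binf Cinf Dinf = 1
  comm0 : A0 * B0 + B0 * D0 = 0
  comm1 : A1 * B1 + B1 * D1 = 0
  comminf : Ainf * Binf + Binf * Dinf = 0
  sq0 : B1 * B0 * Binf * (B1 * B0 * Binf) = 0
  sq1 : Binf * B1 * B0 * (Binf * B1 * B0) = 0
  sqinf : B0 * Binf * B1 * (B0 * Binf * B1) = 0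

/-- dimension of the kernel of the linear map induced by a matrix -/
noncomputable def kdim {m n : Type*} [Fintype n] (M : Matrix m n F2) : ℕ :=
  finrank F2 ↥(LinearMap.ker M.mulVecLin)

/-- dimension of the cokernel of the linear map induced by a matrix -/
noncomputable def cdim {m n : Type*} [Fintype n] (M : Matrix m n F2) : ℕ :=
  finrank F2 ((m → F2) ⧸ LinearMap.range M.mulVecLin)

/-- tensor product of two vectors, as a vector indexed by the product type -/
def tensVec {m n : Type*} (x : m → F2) (y : n → F2) : m × n → F2 :=
  fun p => x p.1 * y p.2

namespace SplicingDatum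

variable (d : SplicingDatum)

def X0M : Matrix (Fin d.a0) (Fin d.a0) F2 := d.B1 * d.B0 * d.Binf
def X1M : Matrix (Fin d.a1) (Fin d.a1) F2 := d.Binf * d.B1 * d.B0
def XinfM : Matrix (Fin d.ainf) (Fin d.ainf) F2 := d.B0 * d.Binf * d.B1

def tau0 : Matrix (Fin d.ainf ⊕ Fin d.a1) (Fin d.ainf ⊕ Fin d.a1) F2 :=
  Matrix.fromBlocks d.A0 d.B0 d.C0 d.D0
def tau0inv : Matrix (Fin d.ainf ⊕ Fin d.a1) (Fin d.ainf ⊕ Fin d.a1) F2 :=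
  Matrix.fromBlocks d.A0 d.B0 d.C0inv d.D0
def tau1 : Matrix (Fin d.a0 ⊕ Fin d.ainf) (Fin d.a0 ⊕ Fin d.ainf) F2 :=
  Matrix.fromBlocks d.A1 d.B1 d.C1 d.D1
def tau1inv : Matrix (Fin d.a0 ⊕ Fin d.ainf) (Fin d.a0 ⊕ Fin d.ainf) F2 :=
  Matrix.fromBlocks d.A1 d.B1 d.C1inv d.D1
def tauinf : Matrix (Fin d.a1 ⊕ Fin d.a0) (Fin d.a1 ⊕ Fin d.a0) F2 :=
  Matrix.fromBlocks d.Ainf d.Binf d.Cinf d.Dinf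
def tauinfinv : Matrix (Fin d.a1 ⊕ Fin d.a0) (Fin d.a1 ⊕ Fin d.a0) F2 :=
  Matrix.fromBlocks d.Ainf d.Binf d.Cinfinv d.Dinf

/-- the map `finf : F^{ainf+a1} → F^{a0+ainf}` -/
def finfM : Matrix (Fin d.a0 ⊕ Fin d.ainf) (Fin d.ainf ⊕ Fin d.a1) F2 :=
  Matrix.fromBlocks 0 0 (1 : Matrix (Fin d.ainf) (Fin d.ainf) F2) 0
/-- the map `f0 : F^{a0+ainf} → F^{a1+a0}` -/
def f0M : Matrix (Fin d.a1 ⊕ Fin d.a0) (Fin d.a0 ⊕ Fin d.ainf) F2 :=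
  Matrix.fromBlocks 0 0 (1 : Matrix (Fin d.a0) (Fin d.a0) F2) 0
/-- the map `f1 : F^{a1+a0} → F^{ainf+a1}` -/
def f1M : Matrix (Fin d.ainf ⊕ Fin d.a1) (Fin d.a1 ⊕ Fin d.a0) F2 :=
  Matrix.fromBlocks 0 0 (1 : Matrix (Fin d.a1) (Fin d.a1) F2) 0

def fbarinfM : Matrix (Fin d.a0 ⊕ Fin d.ainf) (Fin d.ainf ⊕ Fin d.a1) F2 :=
  d.tau1inv * d.finfM * d.tau0
def fbar0M : Matrix (Fin d.a1 ⊕ Fin d.a0) (Fin d.a0 ⊕ Fin d.ainf) F2 :=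
  d.tauinfinv * d.f0M * d.tau1
def fbar1M : Matrix (Fin d.ainf ⊕ Fin d.a1) (Fin d.a1 ⊕ Fin d.a0) F2 :=
  d.tau0inv * d.f1M * d.tauinf

noncomputable def r0 : ℕ := d.B0.rank
noncomputable def r1 : ℕ := d.B1.rank
noncomputable def rinf : ℕ := d.Binf.rank

noncomputable def k0 : ℕ :=
  finrank F2 ↥(LinearMap.ker d.f0M.mulVecLin ⊓ LinearMap.ker d.fbar0M.mulVecLin)
noncomputable def k1 : ℕ :=
  finrank F2 ↥(LinearMap.ker d.f1M.mulVecLin ⊓ LinearMap.ker d.fbar1M.mulVecLin)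
noncomputable def kinf : ℕ :=
  finrank F2 ↥(LinearMap.ker d.finfM.mulVecLin ⊓ LinearMap.ker d.fbarinfM.mulVecLin)

noncomputable def l0 : ℕ :=
  finrank F2 ↥(LinearMap.ker (d.f0M + d.fbar0M).mulVecLin) - d.k0
noncomputable def l1 : ℕ :=
  finrank F2 ↥(LinearMap.ker (d.f1M + d.fbar1M).mulVecLin) - d.k1
noncomputable def linf : ℕ :=
  finrank F2 ↥(LinearMap.ker (d.finfM + d.fbarinfM).mulVecLin) - d.kinf

noncomputable def c0 : ℕ :=
  finrank F2 ((Fin d.a1 ⊕ Fin d.a0 → F2) ⧸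
    (LinearMap.range d.f0M.mulVecLin ⊔ LinearMap.range d.fbar0M.mulVecLin))
noncomputable def c1 : ℕ :=
  finrank F2 ((Fin d.ainf ⊕ Fin d.a1 → F2) ⧸
    (LinearMap.range d.f1M.mulVecLin ⊔ LinearMap.range d.fbar1M.mulVecLin))
noncomputable def cinf : ℕ :=
  finrank F2 ((Fin d.a0 ⊕ Fin d.ainf → F2) ⧸
    (LinearMap.range d.finfM.mulVecLin ⊔ LinearMap.range d.fbarinfM.mulVecLin))

noncomputable def dd0 : ℕ :=
  finrank F2 ↥(LinearMap.range d.f0M.mulVecLin ⊔ LinearMap.range d.fbar0M.mulVecLin) -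
    finrank F2 ↥(LinearMap.range (d.f0M + d.fbar0M).mulVecLin)
noncomputable def dd1 : ℕ :=
  finrank F2 ↥(LinearMap.range d.f1M.mulVecLin ⊔ LinearMap.range d.fbar1M.mulVecLin) -
    finrank F2 ↥(LinearMap.range (d.f1M + d.fbar1M).mulVecLin)
noncomputable def ddinf : ℕ :=
  finrank F2 ↥(LinearMap.range d.finfM.mulVecLin ⊔ LinearMap.range d.fbarinfM.mulVecLin) -
    finrank F2 ↥(LinearMap.range (d.finfM + d.fbarinfM).mulVecLin)

noncomputable def delta0 : ℕ := d.a0 - d.rinf - d.l0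
noncomputable def delta1 : ℕ := d.a1 - d.r0 - d.l1
noncomputable def deltainf : ℕ := d.ainf - d.r1 - d.linf

end SplicingDatum

namespace SplicingDatum

/-- Index type of the source of the splicing map `D`. -/
abbrev Src (e1 e2 : SplicingDatum) : Type :=
  (Fin e1.ainf × Fin e2.ainf) ⊕ (Fin e1.ainf × Fin e2.a0) ⊕ (Fin e1.a1 × Fin e2.a0) ⊕
    (Fin e1.a0 × Fin e2.ainf) ⊕ (Fin e1.a0 × Fin e2.a1) ⊕ (Fin e1.a1 × Fin e2.a1)

/-- Index type of the target of the splicing map `D`. -/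
abbrev Tgt (e1 e2 : SplicingDatum) : Type :=
  (Fin e1.a0 × Fin e2.a0) ⊕ (Fin e1.ainf × Fin e2.a1) ⊕ (Fin e1.ainf × Fin e2.a0) ⊕
    (Fin e1.a1 × Fin e2.ainf) ⊕ (Fin e1.a0 × Fin e2.ainf) ⊕ (Fin e1.a1 × Fin e2.a1)

def row1 (e1 e2 : SplicingDatum) : Matrix (Fin e1.a0 × Fin e2.a0) (Src e1 e2) F2 :=
  Matrix.fromCols ((e1.Dinf * e1.B1) ⊗ₖ (e2.B1 * e2.A0)) <|
  Matrix.fromCols ((e1.B1 * e1.A0) ⊗ₖ (1 : Matrix (Fin e2.a0) (Fin e2.a0) F2)) <|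
  Matrix.fromCols ((e1.B1 * e1.B0) ⊗ₖ (1 : Matrix (Fin e2.a0) (Fin e2.a0) F2)) <|
  Matrix.fromCols ((e1.Dinf * e1.A1) ⊗ₖ (e2.B1 * e2.A0)) <|
  Matrix.fromCols ((1 : Matrix (Fin e1.a0) (Fin e1.a0) F2) ⊗ₖ (e2.B1 * e2.B0)) 0

def row2 (e1 e2 : SplicingDatum) : Matrix (Fin e1.ainf × Fin e2.a1) (Src e1 e2) F2 :=
  Matrix.fromCols ((1 : Matrix (Fin e1.ainf) (Fin e1.ainf) F2) ⊗ₖ (e2.Binf * e2.B1)) <|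
  Matrix.fromCols ((e1.D1 * e1.A0) ⊗ₖ (e2.Binf * e2.A1)) <|
  Matrix.fromCols ((e1.D1 * e1.B0) ⊗ₖ (e2.Binf * e2.A1)) <|
  Matrix.fromCols 0 <|
  Matrix.fromCols ((e1.B0 * e1.Binf) ⊗ₖ (1 : Matrix (Fin e2.a1) (Fin e2.a1) F2))
    ((e1.B0 * e1.Ainf) ⊗ₖ (1 : Matrix (Fin e2.a1) (Fin e2.a1) F2))

def row3 (e1 e2 : SplicingDatum) : Matrix (Fin e1.ainf × Fin e2.a0) (Src e1 e2) F2 :=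
  Matrix.fromCols ((1 : Matrix (Fin e1.ainf) (Fin e1.ainf) F2) ⊗ₖ (e2.Dinf * e2.B1)) <|
  Matrix.fromCols
    ((1 : Matrix (Fin e1.ainf) (Fin e1.ainf) F2) ⊗ₖ (1 : Matrix (Fin e2.a0) (Fin e2.a0) F2) +
      (e1.D1 * e1.A0) ⊗ₖ (e2.Dinf * e2.A1)) <|
  Matrix.fromCols ((e1.D1 * e1.B0) ⊗ₖ (e2.Dinf * e2.A1)) <|
  Matrix.fromCols 0 <|
  Matrix.fromCols 0 0

def row4 (e1 e2 : SplicingDatum) : Matrix (Fin e1.a1 × Fin e2.ainf) (Src e1 e2) F2 :=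
  Matrix.fromCols ((e1.Binf * e1.B1) ⊗ₖ (1 : Matrix (Fin e2.ainf) (Fin e2.ainf) F2)) <|
  Matrix.fromCols 0 <|
  Matrix.fromCols ((1 : Matrix (Fin e1.a1) (Fin e1.a1) F2) ⊗ₖ (e2.B0 * e2.Binf)) <|
  Matrix.fromCols ((e1.Binf * e1.A1) ⊗ₖ (1 : Matrix (Fin e2.ainf) (Fin e2.ainf) F2)) <|
  Matrix.fromCols
    ((e1.D0 * e1.Binf) ⊗ₖ (e2.B0 * e2.Ainf) + (e1.X1M * e1.Binf) ⊗ₖ (e2.B0 * e2.X1M))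
    ((e1.D0 * e1.Ainf) ⊗ₖ (e2.B0 * e2.Ainf) + (e1.X1M * e1.Ainf) ⊗ₖ (e2.B0 * e2.X1M))

def row5 (e1 e2 : SplicingDatum) : Matrix (Fin e1.a0 × Fin e2.ainf) (Src e1 e2) F2 :=
  Matrix.fromCols ((e1.Dinf * e1.B1) ⊗ₖ (e2.D1 * e2.A0)) <|
  Matrix.fromCols 0 <|
  Matrix.fromCols 0 <|
  Matrix.fromCols
    ((1 : Matrix (Fin e1.a0) (Fin e1.a0) F2) ⊗ₖ (1 : Matrix (Fin e2.ainf) (Fin e2.ainf) F2) +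
      (e1.Dinf * e1.A1) ⊗ₖ (e2.D1 * e2.A0)) <|
  Matrix.fromCols ((1 : Matrix (Fin e1.a0) (Fin e1.a0) F2) ⊗ₖ (e2.D1 * e2.B0)) 0

def row6 (e1 e2 : SplicingDatum) : Matrix (Fin e1.a1 × Fin e2.a1) (Src e1 e2) F2 :=
  Matrix.fromCols 0 <|
  Matrix.fromCols 0 <|
  Matrix.fromCols ((1 : Matrix (Fin e1.a1) (Fin e1.a1) F2) ⊗ₖ (e2.D0 * e2.Binf)) <|
  Matrix.fromCols 0 <|
  Matrix.fromCols
    ((e1.D0 * e1.Binf) ⊗ₖ (e2.D0 * e2.Ainf) + (e1.X1M * e1.Binf) ⊗ₖ (e2.D0 * e2.X1M))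
    ((1 : Matrix (Fin e1.a1) (Fin e1.a1) F2) ⊗ₖ (1 : Matrix (Fin e2.a1) (Fin e2.a1) F2) +
      (e1.D0 * e1.Ainf) ⊗ₖ (e2.D0 * e2.Ainf) + (e1.X1M * e1.Ainf) ⊗ₖ (e2.D0 * e2.X1M))

/-- The splicing map `D = D(K1, K2)` as a `6 × 6` block matrix. -/
def spliceD (e1 e2 : SplicingDatum) : Matrix (Tgt e1 e2) (Src e1 e2) F2 :=
  Matrix.fromRows (row1 e1 e2) <| Matrix.fromRows (row2 e1 e2) <|
  Matrix.fromRows (row3 e1 e2) <| Matrix.fromRows (row4 e1 e2) <|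
  Matrix.fromRows (row5 e1 e2) (row6 e1 e2)

end SplicingDatum

/-!
Row vectors killed by a matrix form a space dual to its cokernel. For `D` this space is filtered by
the six target blocks, and each graded piece contains a tensor product of two spaces attached to the
two data, one for each summand of the bound.

For `c • c'` the two factors are left kernels of `B` blocks, and `u ⊗ u'`, placed in a single block,
is killed by `D`. For `d • d'` the factors consist of the `q` and `q'` which extend to row vectors
`(p, q)` and `(p', q')` killed by `f + fbar`; the leading term `q ⊗ q'` is corrected by `p ⊗ q'` and
`q ⊗ p'` in earlier blocks. The shape of `τ` and `τ⁻¹` forces `q B = 0`, and in characteristic two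
the remaining equations for `(p, q)` and `(p', q')` cancel everything else.
-/

section HeadTail

variable {R m n : Type*}

/-- The vectors `x` such that `(x, 0)` lies in the submodule `N` of `R^m ⊕ R^n`: the kernel of the
projection of `N` to `R^n`. -/
def headSubmodule [Semiring R] (N : Submodule R (m ⊕ n → R)) : Submodule R (m → R) :=
  N.comap ((LinearEquiv.sumArrowLequivProdArrow m n R R).symm.toLinearMap ∘ₗ
    LinearMap.inl R (m → R) (n → R))

/-- The projection to `R^n` of the submodule `N` of `R^m ⊕ R^n`, so that `headSubmodule N` and
`tailSubmodule N` are the graded pieces of `N` for the filtration by blocks. -/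
def tailSubmodule [Semiring R] (N : Submodule R (m ⊕ n → R)) : Submodule R (n → R) :=
  N.map (LinearMap.funLeft R R Sum.inr)

theorem mem_headSubmodule [Semiring R] {N : Submodule R (m ⊕ n → R)} {x : m → R} :
    x ∈ headSubmodule N ↔ Sum.elim x 0 ∈ N :=
  Iff.rfl

theorem mem_tailSubmodule [Semiring R] {N : Submodule R (m ⊕ n → R)} {y : n → R} :
    y ∈ tailSubmodule N ↔ ∃ x, Sum.elim x y ∈ N := by
  constructor
  · rintro ⟨z, hz, rfl⟩
    exact ⟨z ∘ Sum.inl, (Sum.elim_comp_inl_inr z).symm ▸ hz⟩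
  · rintro ⟨x, hx⟩
    exact ⟨_, hx, rfl⟩

theorem finrank_headSubmodule_add_finrank_tailSubmodule [DivisionRing R] [Finite m] [Finite n]
    (N : Submodule R (m ⊕ n → R)) :
    finrank R (headSubmodule N) + finrank R (tailSubmodule N) = finrank R N := by
  let incl : headSubmodule N →ₗ[R] N := LinearMap.restrict _ fun _ hx ↦ hx
  let proj : N →ₗ[R] n → R := (LinearMap.funLeft R R Sum.inr).domRestrict N
  have hincl : Function.Injective incl := fun x y hxy ↦
    Subtype.ext <| funext fun i ↦ congrFun (congrArg Subtype.val hxy) (Sum.inl i)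
  have hexact : LinearMap.range incl = LinearMap.ker proj := by
    ext ⟨z, hz⟩
    constructor
    · rintro ⟨x, hx⟩
      rw [← hx]
      rfl
    · intro hker
      have hz' : Sum.elim (z ∘ Sum.inl) 0 = z := by
        rw [← show z ∘ Sum.inr = 0 from hker, Sum.elim_comp_inl_inr]
      exact ⟨⟨z ∘ Sum.inl, show Sum.elim _ _ ∈ N from hz'.symm ▸ hz⟩, Subtype.ext hz'⟩
  calc finrank R (headSubmodule N) + finrank R (tailSubmodule N)
      = finrank R (LinearMap.ker proj) + finrank R (LinearMap.range proj) := by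
        rw [← hexact, LinearMap.finrank_range_of_inj hincl, LinearMap.range_domRestrict]
        rfl
    _ = finrank R N := by rw [add_comm, LinearMap.finrank_range_add_finrank_ker]

end HeadTail

section MatrixRange

variable {R l m n : Type*} [Fintype m] [Fintype n]

theorem range_mulVecLin_fromCols [CommSemiring R] (M : Matrix l m R) (N : Matrix l n R) :
    LinearMap.range (fromCols M N).mulVecLin =
      LinearMap.range M.mulVecLin ⊔ LinearMap.range N.mulVecLin := by
  have h : (fromCols M N).mulVecLin =
      M.mulVecLin.coprod N.mulVecLin ∘ₗ (LinearEquiv.sumArrowLequivProdArrow m n R R) := by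
    ext x : 1
    exact fromCols_mulVec M N _
  rw [h, LinearMap.range_comp, LinearEquiv.range, Submodule.map_top, LinearMap.range_coprod]

theorem finrank_quotient_range_mulVecLin [Field R] (M : Matrix m n R) :
    finrank R ((m → R) ⧸ LinearMap.range M.mulVecLin) =
      finrank R (LinearMap.ker M.vecMulLinear) := by
  have hquot := Submodule.finrank_quotient_add_finrank (LinearMap.range M.mulVecLin)
  have hker := M.vecMulLinear.finrank_range_add_finrank_ker
  have hrank : finrank R (LinearMap.range M.vecMulLinear) =
      finrank R (LinearMap.range M.mulVecLin) := by
    rw [← mulVecLin_transpose]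
    exact rank_transpose M
  lia

end MatrixRange

section KronVec

variable {R m n m' n' : Type*} [Fintype m] [Fintype n] [Fintype m'] [Fintype n']

/-- The Kronecker product of two vectors, bilinearly. It is defined through the identification of
`R^m ⊗ R^n` with `R^(m × n)`, so that `Submodule.map₂ kronVec X Y` is visibly a copy of `X ⊗ Y`. -/
noncomputable def kronVec [CommRing R] : (m → R) →ₗ[R] (n → R) →ₗ[R] (m × n → R) :=
  (TensorProduct.mk R (m → R) (n → R)).compr₂
    ((Pi.basisFun R m).tensorProduct (Pi.basisFun R n)).equivFun.toLinearMap

theorem kronVec_apply [CommRing R] (x : m → R) (y : n → R) (p : m × n) :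
    kronVec x y p = x p.1 * y p.2 :=
  (Basis.tensorProduct_repr_tmul_apply ..).trans (by simp [mul_comm])

theorem kronVec_vecMul_kronecker [CommRing R] (x : m → R) (y : n → R)
    (A : Matrix m m' R) (B : Matrix n n' R) :
    kronVec x y ᵥ* (A ⊗ₖ B) = kronVec (x ᵥ* A) (y ᵥ* B) := by
  ext ⟨i, j⟩
  simp only [vecMul, dotProduct, kronVec_apply, kroneckerMap_apply, Fintype.sum_prod_type,
    Finset.sum_mul_sum, mul_mul_mul_comm]

theorem finrank_mul_finrank_le_of_kronVec_mem [Field R] {X : Submodule R (m → R)}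
    {Y : Submodule R (n → R)} {Z : Submodule R (m × n → R)}
    (h : ∀ x ∈ X, ∀ y ∈ Y, kronVec x y ∈ Z) :
    finrank R X * finrank R Y ≤ finrank R Z :=
  calc finrank R X * finrank R Y = finrank R (Submodule.map₂ kronVec X Y) := by
        rw [kronVec, ← Submodule.map_map₂, LinearEquiv.finrank_map_eq,
          ← TensorProduct.range_mapIncl, LinearMap.finrank_range_of_inj
            (Module.Flat.tensorProduct_mapIncl_injective_of_left ..), finrank_tensorProduct]
    _ ≤ finrank R Z := Submodule.finrank_mono (Submodule.map₂_le.2 h)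

theorem kronVec_add_kronVec_eq_zero [CommRing R] (q : m → R) {a' b' : n → R} (h : a' + b' = 0) :
    kronVec q a' + kronVec q b' = 0 := by
  rw [← map_add, h, map_zero]

theorem kronVec_cross_eq_zero [CommRing R] {a b : m → R} {a' b' q' : n → R}
    (h : a + b = 0) (h' : a' + b' = q') :
    kronVec a q' + (kronVec b a' + kronVec b b') = 0 := by
  rw [← map_add, h', ← LinearMap.add_apply, ← map_add, h, map_zero, LinearMap.zero_apply]

theorem kronVec_cross_eq_zero_of_charTwo [CommRing R] [CharP R 2] {a b q : m → R}
    {a' b' q' : n → R} (h : a + b = q) (h' : a' + b' = q') :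
    kronVec a q' + (kronVec b a' + (kronVec q q' + kronVec b b')) = 0 :=
  calc kronVec a q' + (kronVec b a' + (kronVec q q' + kronVec b b'))
      = kronVec (a + b) q' + kronVec q q' := by
        rw [map_add, LinearMap.add_apply, ← h', map_add (kronVec b)]
        abel
    _ = 0 := by
        rw [h]
        exact funext fun _ ↦ CharTwo.add_self_eq_zero _

end KronVec

/-- An invertible block matrix `[[A, B], [C, D]]` whose inverse is `[[A, B], [C', D]]`, the shape of
`τ₀`, `τ₁` and `τ∞` in a splicing datum. Over a commutative ring a right inverse is also a left
inverse, so only one of the two identities is recorded. -/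
structure SplicingMatrix (R m n : Type*) [CommRing R] [Fintype m] [Fintype n] [DecidableEq m]
    [DecidableEq n] where
  A : Matrix m m R
  B : Matrix m n R
  C : Matrix n m R
  D : Matrix n n R
  C' : Matrix n m R
  mul_inverse : fromBlocks A B C D * fromBlocks A B C' D = 1

namespace SplicingMatrix

section Shift

variable {R l m n : Type*} [Semiring R] [DecidableEq m]

variable (R l m n) in
/-- The matrix `[[0, 0], [1, 0]]` carrying the first summand of `R^m ⊕ R^n` to the second summand
of `R^l ⊕ R^m`: the common shape of the maps `f₀`, `f₁` and `f∞`. -/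
def shift : Matrix (l ⊕ m) (m ⊕ n) R :=
  fromBlocks 0 0 1 0

theorem elim_vecMul_shift [Fintype l] [Fintype m] (p : l → R) (q : m → R) :
    Sum.elim p q ᵥ* shift R l m n = Sum.elim q 0 := by
  simp [shift, vecMul_fromBlocks]

end Shift

section CommRing

variable {R l m n : Type*} [CommRing R] [Fintype l] [Fintype m] [Fintype n] [DecidableEq l]
  [DecidableEq m] [DecidableEq n]

/-- The block matrix `[[A, B], [C, D]]` itself. -/
def toMatrix (σ : SplicingMatrix R m n) : Matrix (m ⊕ n) (m ⊕ n) R :=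
  fromBlocks σ.A σ.B σ.C σ.D

/-- The inverse block matrix `[[A, B], [C', D]]`. -/
def inverse (σ : SplicingMatrix R m n) : Matrix (m ⊕ n) (m ⊕ n) R :=
  fromBlocks σ.A σ.B σ.C' σ.D

theorem A_mul_A_add_B_mul_C' (σ : SplicingMatrix R m n) : σ.A * σ.A + σ.B * σ.C' = 1 := by
  have h := σ.mul_inverse
  rw [fromBlocks_multiply, ← fromBlocks_one, fromBlocks_inj] at h
  exact h.1

theorem A_mul_B_add_B_mul_D (σ : SplicingMatrix R m n) : σ.A * σ.B + σ.B * σ.D = 0 := by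
  have h := σ.mul_inverse
  rw [fromBlocks_multiply, ← fromBlocks_one, fromBlocks_inj] at h
  exact h.2.1

theorem eq_zero_of_vecMul_A_of_vecMul_B (σ : SplicingMatrix R m n) {x : m → R}
    (hA : x ᵥ* σ.A = 0) (hB : x ᵥ* σ.B = 0) : x = 0 :=
  calc x = x ᵥ* σ.A ᵥ* σ.A + x ᵥ* σ.B ᵥ* σ.C' := by
        rw [vecMul_vecMul, vecMul_vecMul, ← vecMul_add, A_mul_A_add_B_mul_C', vecMul_one]
    _ = 0 := by rw [hA, hB, zero_vecMul, zero_vecMul, add_zero]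

/-- The map `τ⁻¹ ∘ f ∘ σ`, where `f` is the `shift`: the common shape of the maps `fbar₀`, `fbar₁`
and `fbar∞`. -/
def conjShift (σ : SplicingMatrix R m n) (τ : SplicingMatrix R l m) : Matrix (l ⊕ m) (m ⊕ n) R :=
  τ.inverse * shift R l m n * σ.toMatrix

/-- The codimension of `im f + im fbar`: the number `c∞`, `c₀` or `c₁` of a splicing datum when
`(σ, τ)` is `(τ₀, τ₁)`, `(τ₁, τ∞)` or `(τ∞, τ₀)`. -/
noncomputable def jointCorank (σ : SplicingMatrix R m n) (τ : SplicingMatrix R l m) : ℕ :=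
  finrank R ((l ⊕ m → R) ⧸
    (LinearMap.range (shift R l m n).mulVecLin ⊔ LinearMap.range (conjShift σ τ).mulVecLin))

/-- The dimension of `(im f + im fbar) / im (f + fbar)`: the number `d∞`, `d₀` or `d₁` of a splicing
datum when `(σ, τ)` is `(τ₀, τ₁)`, `(τ₁, τ∞)` or `(τ∞, τ₀)`. The subtraction does not truncate, as
`im (f + fbar)` is contained in `im f + im fbar`. -/
noncomputable def rankGap (σ : SplicingMatrix R m n) (τ : SplicingMatrix R l m) : ℕ :=
  finrank R ↥(LinearMap.range (shift R l m n).mulVecLin ⊔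
    LinearMap.range (conjShift σ τ).mulVecLin) -
    finrank R (LinearMap.range (shift R l m n + conjShift σ τ).mulVecLin)

/-- The row vectors annihilated by `f + fbar`. -/
def sumLeftKer (σ : SplicingMatrix R m n) (τ : SplicingMatrix R l m) : Submodule R (l ⊕ m → R) :=
  LinearMap.ker (shift R l m n + conjShift σ τ).vecMulLinear

variable (σ : SplicingMatrix R m n) (τ : SplicingMatrix R l m) {p : l → R} {q : m → R}

theorem elim_vecMul_conjShift (p : l → R) (q : m → R) :
    Sum.elim p q ᵥ* conjShift σ τ =
      Sum.elim ((p ᵥ* τ.B + q ᵥ* τ.D) ᵥ* σ.A) ((p ᵥ* τ.B + q ᵥ* τ.D) ᵥ* σ.B) := by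
  simp [conjShift, inverse, shift, toMatrix, fromBlocks_multiply, vecMul_fromBlocks, add_vecMul]

theorem elim_mem_ker_fromCols_shift_conjShift :
    Sum.elim p q ∈ LinearMap.ker (fromCols (shift R l m n) (conjShift σ τ)).vecMulLinear ↔
      p ᵥ* τ.B = 0 ∧ q = 0 := by
  simp only [LinearMap.mem_ker, vecMulLinear_apply, vecMul_fromCols, elim_vecMul_shift,
    elim_vecMul_conjShift, ← Sum.elim_zero_zero, Sum.elim_eq_iff]
  constructor
  · rintro ⟨⟨rfl, -⟩, hA, hB⟩
    rw [zero_vecMul, add_zero] at hA hB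
    exact ⟨σ.eq_zero_of_vecMul_A_of_vecMul_B hA hB, rfl⟩
  · rintro ⟨hp, rfl⟩
    simp [hp]

theorem elim_mem_sumLeftKer :
    Sum.elim p q ∈ sumLeftKer σ τ ↔
      q + (p ᵥ* τ.B + q ᵥ* τ.D) ᵥ* σ.A = 0 ∧ (p ᵥ* τ.B + q ᵥ* τ.D) ᵥ* σ.B = 0 := by
  rw [sumLeftKer, LinearMap.mem_ker, vecMulLinear_apply, vecMul_add, elim_vecMul_shift,
    elim_vecMul_conjShift, ← Sum.elim_add_add, ← Sum.elim_zero_zero, Sum.elim_eq_iff, zero_add]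

theorem headSubmodule_sumLeftKer :
    headSubmodule (sumLeftKer σ τ) = LinearMap.ker τ.B.vecMulLinear := by
  ext p
  rw [mem_headSubmodule, elim_mem_sumLeftKer, zero_vecMul, add_zero, zero_add]
  refine ⟨fun ⟨hA, hB⟩ ↦ σ.eq_zero_of_vecMul_A_of_vecMul_B hA hB, fun hp ↦ ?_⟩
  rw [LinearMap.mem_ker, vecMulLinear_apply] at hp
  simp only [hp, zero_vecMul, and_self]

variable {σ τ}

theorem vecMul_B_eq_zero_of_elim_mem_sumLeftKer (h : Sum.elim p q ∈ sumLeftKer σ τ) :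
    q ᵥ* σ.B = 0 := by
  obtain ⟨hA, hB⟩ := (elim_mem_sumLeftKer σ τ).1 h
  set w := p ᵥ* τ.B + q ᵥ* τ.D
  calc q ᵥ* σ.B = (q + w ᵥ* σ.A) ᵥ* σ.B + w ᵥ* σ.B ᵥ* σ.D - w ᵥ* (σ.A * σ.B + σ.B * σ.D) := by
        rw [add_vecMul, vecMul_add, vecMul_vecMul, vecMul_vecMul]
        abel
    _ = 0 := by rw [hA, hB, A_mul_B_add_B_mul_D, zero_vecMul, zero_vecMul, vecMul_zero]; abel

theorem vecMul_relations_of_elim_mem_sumLeftKer [CharP R 2] (h : Sum.elim p q ∈ sumLeftKer σ τ) :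
    q ᵥ* σ.B = 0 ∧ p ᵥ* τ.B ᵥ* σ.A + q ᵥ* τ.D ᵥ* σ.A = q ∧
      p ᵥ* τ.B ᵥ* σ.B + q ᵥ* τ.D ᵥ* σ.B = 0 := by
  obtain ⟨hA, hB⟩ := (elim_mem_sumLeftKer σ τ).1 h
  simp only [← add_vecMul]
  exact ⟨vecMul_B_eq_zero_of_elim_mem_sumLeftKer h,
    funext fun i ↦ (CharTwo.add_eq_zero.1 (congrFun hA i)).symm, hB⟩

end CommRing

section Field

variable {K l m n : Type*} [Field K] [Fintype l] [Fintype m] [Fintype n] [DecidableEq l]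
  [DecidableEq m] [DecidableEq n] (σ : SplicingMatrix K m n) (τ : SplicingMatrix K l m)

theorem jointCorank_eq_finrank_ker :
    jointCorank σ τ = finrank K (LinearMap.ker τ.B.vecMulLinear) := by
  set N := LinearMap.ker (fromCols (shift K l m n) (conjShift σ τ)).vecMulLinear with hN
  have hhead : headSubmodule N = LinearMap.ker τ.B.vecMulLinear := by
    ext p
    exact (elim_mem_ker_fromCols_shift_conjShift σ τ).trans (and_iff_left rfl)
  have htail : tailSubmodule N = ⊥ := by
    refine (Submodule.eq_bot_iff _).2 fun q hq ↦ ?_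
    obtain ⟨p, hpq⟩ := mem_tailSubmodule.1 hq
    exact ((elim_mem_ker_fromCols_shift_conjShift σ τ).1 hpq).2
  rw [jointCorank, ← range_mulVecLin_fromCols, finrank_quotient_range_mulVecLin, ← hN,
    ← finrank_headSubmodule_add_finrank_tailSubmodule, hhead, htail, finrank_bot, add_zero]

theorem rankGap_eq_finrank_tailSubmodule :
    rankGap σ τ = finrank K (tailSubmodule (sumLeftKer σ τ)) := by
  have hjoint := (LinearMap.range (shift K l m n).mulVecLin ⊔
    LinearMap.range (conjShift σ τ).mulVecLin).finrank_quotient_add_finrank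
  have hsum := (LinearMap.range
    (shift K l m n + conjShift σ τ).mulVecLin).finrank_quotient_add_finrank
  have hcorank := jointCorank_eq_finrank_ker σ τ
  have hsplit := finrank_headSubmodule_add_finrank_tailSubmodule (sumLeftKer σ τ)
  rw [jointCorank] at hcorank
  rw [finrank_quotient_range_mulVecLin, ← sumLeftKer] at hsum
  rw [headSubmodule_sumLeftKer] at hsplit
  rw [rankGap]
  lia

variable {σ τ} {l' m' n' : Type*} [Fintype l'] [Fintype m'] [Fintype n'] [DecidableEq l']
  [DecidableEq m'] [DecidableEq n'] {σ' : SplicingMatrix K m' n'} {τ' : SplicingMatrix K l' m'}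

theorem jointCorank_mul_jointCorank_le {Z : Submodule K (l × l' → K)}
    (h : ∀ u v, u ᵥ* τ.B = 0 → v ᵥ* τ'.B = 0 → kronVec u v ∈ Z) :
    jointCorank σ τ * jointCorank σ' τ' ≤ finrank K Z := by
  rw [jointCorank_eq_finrank_ker, jointCorank_eq_finrank_ker]
  exact finrank_mul_finrank_le_of_kronVec_mem fun u hu v hv ↦ h u v hu hv

theorem rankGap_mul_rankGap_le {Z : Submodule K (m × m' → K)}
    (h : ∀ p q p' q', Sum.elim p q ∈ sumLeftKer σ τ → Sum.elim p' q' ∈ sumLeftKer σ' τ' →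
      kronVec q q' ∈ Z) :
    rankGap σ τ * rankGap σ' τ' ≤ finrank K Z := by
  rw [rankGap_eq_finrank_tailSubmodule, rankGap_eq_finrank_tailSubmodule]
  refine finrank_mul_finrank_le_of_kronVec_mem fun q hq q' hq' ↦ ?_
  obtain ⟨p, hpq⟩ := mem_tailSubmodule.1 hq
  obtain ⟨p', hpq'⟩ := mem_tailSubmodule.1 hq'
  exact h p q p' q' hpq hpq'

end Field

end SplicingMatrix

open SplicingMatrix

/-- The three matrices of a splicing datum, over any commutative ring and with arbitrary finite
index types in place of `Fin a₀`, `Fin a₁` and `Fin a∞`. -/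
structure SplicingTriple (R ι₀ ι₁ ιinf : Type*) [CommRing R]
    [Fintype ι₀] [Fintype ι₁] [Fintype ιinf]
    [DecidableEq ι₀] [DecidableEq ι₁] [DecidableEq ιinf] where
  τ₀ : SplicingMatrix R ιinf ι₁
  τ₁ : SplicingMatrix R ι₀ ιinf
  τinf : SplicingMatrix R ι₁ ι₀

namespace SplicingTriple

variable {ι₀ ι₁ ιinf κ₀ κ₁ κinf : Type*}
  [Fintype ι₀] [Fintype ι₁] [Fintype ιinf] [Fintype κ₀] [Fintype κ₁] [Fintype κinf]
  [DecidableEq ι₀] [DecidableEq ι₁] [DecidableEq ιinf]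
  [DecidableEq κ₀] [DecidableEq κ₁] [DecidableEq κinf]

section CommRing

variable {R : Type*} [CommRing R]

/-- The matrix `X₁ = B∞ B₁ B₀` of a splicing datum. -/
def X₁ (S : SplicingTriple R ι₀ ι₁ ιinf) : Matrix ι₁ ι₁ R :=
  S.τinf.B * S.τ₁.B * S.τ₀.B

/-- The splicing map `D` of the data `S` and `T`. Source and target are sums of six tensor products,
nested to the right in the order in which the blocks of `D` are listed. -/
def spliceMap (S : SplicingTriple R ι₀ ι₁ ιinf) (T : SplicingTriple R κ₀ κ₁ κinf) :
    Matrix (ι₀ × κ₀ ⊕ ιinf × κ₁ ⊕ ιinf × κ₀ ⊕ ι₁ × κinf ⊕ ι₀ × κinf ⊕ ι₁ × κ₁)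
      (ιinf × κinf ⊕ ιinf × κ₀ ⊕ ι₁ × κ₀ ⊕ ι₀ × κinf ⊕ ι₀ × κ₁ ⊕ ι₁ × κ₁) R :=
  fromRows
    (fromCols ((S.τinf.D * S.τ₁.B) ⊗ₖ (T.τ₁.B * T.τ₀.A)) <|
      fromCols ((S.τ₁.B * S.τ₀.A) ⊗ₖ 1) <|
      fromCols ((S.τ₁.B * S.τ₀.B) ⊗ₖ 1) <|
      fromCols ((S.τinf.D * S.τ₁.A) ⊗ₖ (T.τ₁.B * T.τ₀.A)) <|
      fromCols (1 ⊗ₖ (T.τ₁.B * T.τ₀.B)) 0) <|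
  fromRows
    (fromCols (1 ⊗ₖ (T.τinf.B * T.τ₁.B)) <|
      fromCols ((S.τ₁.D * S.τ₀.A) ⊗ₖ (T.τinf.B * T.τ₁.A)) <|
      fromCols ((S.τ₁.D * S.τ₀.B) ⊗ₖ (T.τinf.B * T.τ₁.A)) <|
      fromCols 0 <|
      fromCols ((S.τ₀.B * S.τinf.B) ⊗ₖ 1) ((S.τ₀.B * S.τinf.A) ⊗ₖ 1)) <|
  fromRows
    (fromCols (1 ⊗ₖ (T.τinf.D * T.τ₁.B)) <|
      fromCols (1 ⊗ₖ 1 + (S.τ₁.D * S.τ₀.A) ⊗ₖ (T.τinf.D * T.τ₁.A)) <|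
      fromCols ((S.τ₁.D * S.τ₀.B) ⊗ₖ (T.τinf.D * T.τ₁.A)) <|
      fromCols 0 <|
      fromCols 0 0) <|
  fromRows
    (fromCols ((S.τinf.B * S.τ₁.B) ⊗ₖ 1) <|
      fromCols 0 <|
      fromCols (1 ⊗ₖ (T.τ₀.B * T.τinf.B)) <|
      fromCols ((S.τinf.B * S.τ₁.A) ⊗ₖ 1) <|
      fromCols ((S.τ₀.D * S.τinf.B) ⊗ₖ (T.τ₀.B * T.τinf.A) +
          (S.X₁ * S.τinf.B) ⊗ₖ (T.τ₀.B * T.X₁))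
        ((S.τ₀.D * S.τinf.A) ⊗ₖ (T.τ₀.B * T.τinf.A) +
          (S.X₁ * S.τinf.A) ⊗ₖ (T.τ₀.B * T.X₁))) <|
  fromRows
    (fromCols ((S.τinf.D * S.τ₁.B) ⊗ₖ (T.τ₁.D * T.τ₀.A)) <|
      fromCols 0 <|
      fromCols 0 <|
      fromCols (1 ⊗ₖ 1 + (S.τinf.D * S.τ₁.A) ⊗ₖ (T.τ₁.D * T.τ₀.A)) <|
      fromCols (1 ⊗ₖ (T.τ₁.D * T.τ₀.B)) 0)
    (fromCols 0 <|
      fromCols 0 <|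
      fromCols (1 ⊗ₖ (T.τ₀.D * T.τinf.B)) <|
      fromCols 0 <|
      fromCols ((S.τ₀.D * S.τinf.B) ⊗ₖ (T.τ₀.D * T.τinf.A) +
          (S.X₁ * S.τinf.B) ⊗ₖ (T.τ₀.D * T.X₁))
        (1 ⊗ₖ 1 + (S.τ₀.D * S.τinf.A) ⊗ₖ (T.τ₀.D * T.τinf.A) +
          (S.X₁ * S.τinf.A) ⊗ₖ (T.τ₀.D * T.X₁)))

/-- The row vectors annihilated by the splicing map, a space dual to its cokernel. -/
def spliceLeftKer (S : SplicingTriple R ι₀ ι₁ ιinf) (T : SplicingTriple R κ₀ κ₁ κinf) :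
    Submodule R (ι₀ × κ₀ ⊕ ιinf × κ₁ ⊕ ιinf × κ₀ ⊕ ι₁ × κinf ⊕ ι₀ × κinf ⊕ ι₁ × κ₁ → R) :=
  LinearMap.ker (S.spliceMap T).vecMulLinear

variable {S : SplicingTriple R ι₀ ι₁ ιinf} {T : SplicingTriple R κ₀ κ₁ κinf}

theorem vecMul_spliceMap_eq_zero_of_ker_inf_inf {u : ι₀ → R} {v : κ₀ → R}
    (hu : u ᵥ* S.τ₁.B = 0) (hv : v ᵥ* T.τ₁.B = 0) :
    Sum.elim (kronVec u v) 0 ᵥ* S.spliceMap T = 0 := by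
  simp [spliceMap, -fromRows_fromCols_eq_fromBlocks, vecMul_fromCols, kronVec_vecMul_kronecker,
    ← vecMul_vecMul, hu, hv]

theorem vecMul_spliceMap_eq_zero_of_ker_one_zero {u : ιinf → R} {v : κ₁ → R}
    (hu : u ᵥ* S.τ₀.B = 0) (hv : v ᵥ* T.τinf.B = 0) :
    Sum.elim 0 (Sum.elim (kronVec u v) 0) ᵥ* S.spliceMap T = 0 := by
  simp [spliceMap, -fromRows_fromCols_eq_fromBlocks, vecMul_fromCols, kronVec_vecMul_kronecker,
    ← vecMul_vecMul, hu, hv]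

theorem vecMul_spliceMap_eq_zero_of_ker_zero_one {u : ι₁ → R} {v : κinf → R}
    (hu : u ᵥ* S.τinf.B = 0) (hv : v ᵥ* T.τ₀.B = 0) :
    Sum.elim 0 (Sum.elim 0 (Sum.elim 0 (Sum.elim (kronVec u v) 0))) ᵥ* S.spliceMap T = 0 := by
  simp [spliceMap, -fromRows_fromCols_eq_fromBlocks, vecMul_fromCols, kronVec_vecMul_kronecker,
    ← vecMul_vecMul, vecMul_add, X₁, hu, hv]

theorem vecMul_spliceMap_eq_zero_of_sumLeftKer_inf_zero [CharP R 2]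
    {p : ι₀ → R} {q : ιinf → R} {p' : κ₁ → R} {q' : κ₀ → R}
    (h : Sum.elim p q ∈ sumLeftKer S.τ₀ S.τ₁) (h' : Sum.elim p' q' ∈ sumLeftKer T.τ₁ T.τinf) :
    Sum.elim (kronVec p q') (Sum.elim (kronVec q p') (Sum.elim (kronVec q q') 0)) ᵥ*
      S.spliceMap T = 0 := by
  obtain ⟨hq, hA, hB⟩ := vecMul_relations_of_elim_mem_sumLeftKer h
  obtain ⟨hq', hA', hB'⟩ := vecMul_relations_of_elim_mem_sumLeftKer h'
  have hq_col := kronVec_add_kronVec_eq_zero q hB'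
  have h_cross := kronVec_cross_eq_zero hB hA'
  have h_charTwo := kronVec_cross_eq_zero_of_charTwo hA hA'
  simp [spliceMap, -fromRows_fromCols_eq_fromBlocks, vecMul_fromCols, kronVec_vecMul_kronecker,
    ← vecMul_vecMul, vecMul_add, ← Sum.elim_add_add, hq, hq', hq_col, h_cross, h_charTwo]

theorem vecMul_spliceMap_eq_zero_of_sumLeftKer_zero_inf [CharP R 2]
    {p : ι₁ → R} {q : ι₀ → R} {p' : κ₀ → R} {q' : κinf → R}
    (h : Sum.elim p q ∈ sumLeftKer S.τ₁ S.τinf) (h' : Sum.elim p' q' ∈ sumLeftKer T.τ₀ T.τ₁) :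
    Sum.elim (kronVec q p') (Sum.elim 0 (Sum.elim 0 (Sum.elim (kronVec p q')
      (Sum.elim (kronVec q q') 0)))) ᵥ* S.spliceMap T = 0 := by
  obtain ⟨hq, hA, hB⟩ := vecMul_relations_of_elim_mem_sumLeftKer h
  obtain ⟨hq', hA', hB'⟩ := vecMul_relations_of_elim_mem_sumLeftKer h'
  have hq_col := kronVec_add_kronVec_eq_zero q hB'
  have h_cross := (add_left_comm ..).trans (kronVec_cross_eq_zero hB hA')
  have h_charTwo := (add_left_comm ..).trans (kronVec_cross_eq_zero_of_charTwo hA hA')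
  simp [spliceMap, -fromRows_fromCols_eq_fromBlocks, vecMul_fromCols, kronVec_vecMul_kronecker,
    ← vecMul_vecMul, vecMul_add, ← Sum.elim_add_add, hq, hq', hq_col, h_cross, h_charTwo]

theorem vecMul_spliceMap_eq_zero_of_sumLeftKer_one_one [CharP R 2]
    {p : ιinf → R} {q : ι₁ → R} {p' : κinf → R} {q' : κ₁ → R}
    (h : Sum.elim p q ∈ sumLeftKer S.τinf S.τ₀) (h' : Sum.elim p' q' ∈ sumLeftKer T.τinf T.τ₀) :
    Sum.elim 0 (Sum.elim (kronVec p q') (Sum.elim 0 (Sum.elim (kronVec q p')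
      (Sum.elim 0 (kronVec q q'))))) ᵥ* S.spliceMap T = 0 := by
  obtain ⟨hq, hA, hB⟩ := vecMul_relations_of_elim_mem_sumLeftKer h
  obtain ⟨hq', hA', hB'⟩ := vecMul_relations_of_elim_mem_sumLeftKer h'
  have hq_col := kronVec_add_kronVec_eq_zero q hB'
  have h_cross := kronVec_cross_eq_zero hB hA'
  have h_charTwo := kronVec_cross_eq_zero_of_charTwo hA hA'
  simp [spliceMap, -fromRows_fromCols_eq_fromBlocks, vecMul_fromCols, kronVec_vecMul_kronecker,
    ← vecMul_vecMul, vecMul_add, ← Sum.elim_add_add, X₁, hq, hq', hq_col, h_cross, h_charTwo]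

end CommRing

section Field

variable {K : Type*} [Field K] (S : SplicingTriple K ι₀ ι₁ ιinf) (T : SplicingTriple K κ₀ κ₁ κinf)

theorem jointCorank_inf_mul_jointCorank_inf_le :
    jointCorank S.τ₀ S.τ₁ * jointCorank T.τ₀ T.τ₁ ≤
      finrank K (headSubmodule <| S.spliceLeftKer T) :=
  jointCorank_mul_jointCorank_le fun _ _ hu hv ↦
    mem_headSubmodule.2 <| vecMul_spliceMap_eq_zero_of_ker_inf_inf hu hv

theorem jointCorank_one_mul_jointCorank_zero_le :
    jointCorank S.τinf S.τ₀ * jointCorank T.τ₁ T.τinf ≤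
      finrank K (headSubmodule <| tailSubmodule <| S.spliceLeftKer T) :=
  jointCorank_mul_jointCorank_le fun _ _ hu hv ↦
    mem_headSubmodule.2 <| mem_tailSubmodule.2 ⟨_, vecMul_spliceMap_eq_zero_of_ker_one_zero hu hv⟩

theorem jointCorank_zero_mul_jointCorank_one_le :
    jointCorank S.τ₁ S.τinf * jointCorank T.τinf T.τ₀ ≤
      finrank K (headSubmodule <| tailSubmodule <| tailSubmodule <|
        tailSubmodule <| S.spliceLeftKer T) :=
  jointCorank_mul_jointCorank_le fun _ _ hu hv ↦
    mem_headSubmodule.2 <| mem_tailSubmodule.2 ⟨_, mem_tailSubmodule.2 ⟨_, mem_tailSubmodule.2 ⟨_,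
      vecMul_spliceMap_eq_zero_of_ker_zero_one hu hv⟩⟩⟩

theorem rankGap_inf_mul_rankGap_zero_le [CharP K 2] :
    rankGap S.τ₀ S.τ₁ * rankGap T.τ₁ T.τinf ≤
      finrank K (headSubmodule <| tailSubmodule <| tailSubmodule <| S.spliceLeftKer T) :=
  rankGap_mul_rankGap_le fun _ _ _ _ h h' ↦
    mem_headSubmodule.2 <| mem_tailSubmodule.2 ⟨_, mem_tailSubmodule.2 ⟨_,
      vecMul_spliceMap_eq_zero_of_sumLeftKer_inf_zero h h'⟩⟩

theorem rankGap_zero_mul_rankGap_inf_le [CharP K 2] :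
    rankGap S.τ₁ S.τinf * rankGap T.τ₀ T.τ₁ ≤
      finrank K (headSubmodule <| tailSubmodule <| tailSubmodule <|
        tailSubmodule <| tailSubmodule <| S.spliceLeftKer T) :=
  rankGap_mul_rankGap_le fun _ _ _ _ h h' ↦
    mem_headSubmodule.2 <| mem_tailSubmodule.2 ⟨_, mem_tailSubmodule.2 ⟨_, mem_tailSubmodule.2 ⟨_,
      mem_tailSubmodule.2 ⟨_, vecMul_spliceMap_eq_zero_of_sumLeftKer_zero_inf h h'⟩⟩⟩⟩

theorem rankGap_one_mul_rankGap_one_le [CharP K 2] :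
    rankGap S.τinf S.τ₀ * rankGap T.τinf T.τ₀ ≤
      finrank K (tailSubmodule <| tailSubmodule <| tailSubmodule <|
        tailSubmodule <| tailSubmodule <| S.spliceLeftKer T) :=
  rankGap_mul_rankGap_le fun _ _ _ _ h h' ↦
    mem_tailSubmodule.2 ⟨_, mem_tailSubmodule.2 ⟨_, mem_tailSubmodule.2 ⟨_, mem_tailSubmodule.2 ⟨_,
      mem_tailSubmodule.2 ⟨_, vecMul_spliceMap_eq_zero_of_sumLeftKer_one_one h h'⟩⟩⟩⟩⟩

end Field

end SplicingTriple

theorem stmt6_general {K ι₀ ι₁ ιinf κ₀ κ₁ κinf : Type*} [Field K] [CharP K 2]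
    [Fintype ι₀] [Fintype ι₁] [Fintype ιinf] [Fintype κ₀] [Fintype κ₁] [Fintype κinf]
    [DecidableEq ι₀] [DecidableEq ι₁] [DecidableEq ιinf]
    [DecidableEq κ₀] [DecidableEq κ₁] [DecidableEq κinf]
    (S : SplicingTriple K ι₀ ι₁ ιinf) (T : SplicingTriple K κ₀ κ₁ κinf) :
    jointCorank S.τ₀ S.τ₁ * jointCorank T.τ₀ T.τ₁ +
          jointCorank S.τ₁ S.τinf * jointCorank T.τinf T.τ₀ +
          jointCorank S.τinf S.τ₀ * jointCorank T.τ₁ T.τinf +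
        rankGap S.τ₀ S.τ₁ * rankGap T.τ₁ T.τinf +
        rankGap S.τ₁ S.τinf * rankGap T.τ₀ T.τ₁ +
        rankGap S.τinf S.τ₀ * rankGap T.τinf T.τ₀ ≤
      finrank K ((_ → K) ⧸ LinearMap.range (S.spliceMap T).mulVecLin) := by
  rw [finrank_quotient_range_mulVecLin, ← SplicingTriple.spliceLeftKer]
  have split₁ := finrank_headSubmodule_add_finrank_tailSubmodule (S.spliceLeftKer T)
  have split₂ := finrank_headSubmodule_add_finrank_tailSubmodule
    (tailSubmodule <| S.spliceLeftKer T)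
  have split₃ := finrank_headSubmodule_add_finrank_tailSubmodule
    (tailSubmodule <| tailSubmodule <| S.spliceLeftKer T)
  have split₄ := finrank_headSubmodule_add_finrank_tailSubmodule
    (tailSubmodule <| tailSubmodule <| tailSubmodule <| S.spliceLeftKer T)
  have split₅ := finrank_headSubmodule_add_finrank_tailSubmodule
    (tailSubmodule <| tailSubmodule <| tailSubmodule <| tailSubmodule <| S.spliceLeftKer T)
  have h₁ := S.jointCorank_inf_mul_jointCorank_inf_le T
  have h₂ := S.jointCorank_one_mul_jointCorank_zero_le T
  have h₃ := S.rankGap_inf_mul_rankGap_zero_le T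
  have h₄ := S.jointCorank_zero_mul_jointCorank_one_le T
  have h₅ := S.rankGap_zero_mul_rankGap_inf_le T
  have h₆ := S.rankGap_one_mul_rankGap_one_le T
  lia

/-- The splicing triple over `F2` underlying a splicing datum. -/
def SplicingDatum.toTriple (d : SplicingDatum) :
    SplicingTriple F2 (Fin d.a0) (Fin d.a1) (Fin d.ainf) where
  τ₀ := ⟨d.A0, d.B0, d.C0, d.D0, d.C0inv, d.inv0_left⟩
  τ₁ := ⟨d.A1, d.B1, d.C1, d.D1, d.C1inv, d.inv1_left⟩
  τinf := ⟨d.Ainf, d.Binf, d.Cinf, d.Dinf, d.Cinfinv, d.invinf_left⟩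

open SplicingDatum in
/-- lower bound for the dimension of the cokernel of the splicing map `D`. -/
theorem stmt6 (e1 e2 : SplicingDatum) :
    cdim (spliceD e1 e2) ≥
      e1.cinf * e2.cinf + e1.c0 * e2.c1 + e1.c1 * e2.c0 +
        e1.ddinf * e2.dd0 + e1.dd0 * e2.ddinf + e1.dd1 * e2.dd1 :=
  stmt6_general e1.toTriple e2.toTriple
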